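/- Let F be a monotone hazard rate probability distribution supported on the non-negative reals with density f and strictly increasing virtual valuation φ. Then R^s_F ≥ A_F + V_F/(4e), where R^s_F = ∫₀^∞ φ⁻¹(z)·(1−F(φ⁻¹(z)))·f(z) dz. (This is the expected revenue of the optimal-consistency mechanism when the prediction for the profiled agent is incorrect and no revenue is extracted from her.) -/

import Mathlib

open MeasureTheory Real Set

/-!
Let `S = 1 - F` be the survival function. For `ψ = φ⁻¹`, subtracting `A_F` from the revenue leaves
`∫ z S(ψ z) f(z) dz`, and the definition of `φ` gives `ψ z - z = 1 / h (ψ z)`.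

A monotone hazard rate means that `log S` is concave, since `(log S)' = -h`; this is used twice.
The tangent to `log S` at `ψ z` has slope `-1 / (ψ z - z)`, so `log S` drops by at most `1` between
`z` and `ψ z`, that is, `S (ψ z) ≥ S z / e`. Midpoint concavity gives `S (2 z) ≤ S z ^ 2`, and with
the tail formula `∫ z k(z) dz = ∫ (∫_z^∞ k) dz`, applied to `k = f` and to `k = 2 S f`,
`∫ z S f = (1/2) ∫ S² ≥ (1/2) ∫ S (2 z) dz = (1/4) ∫ S = V_F / 4`.
-/

section Survival

/-- The survival function `1 - F` of a density `f`, encoded as a tail integral so that it depends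
on the values of `f` to the right of `x` only and `f` need not be normalized. -/
noncomputable def survival (f : ℝ → ℝ) (x : ℝ) : ℝ := ∫ t in Ioi x, f t

/-- The hazard rate `f / (1 - F)` of a density `f`. -/
noncomputable def hazardRate (f : ℝ → ℝ) (x : ℝ) : ℝ := f x / survival f x

variable {f : ℝ → ℝ} {a x : ℝ}

theorem survival_eq_sub_intervalIntegral (hf : IntegrableOn f (Ioi a)) (hx : a ≤ x) :
    survival f x = survival f a - ∫ t in a..x, f t :=
  eq_sub_of_add_eq' (intervalIntegral.integral_interval_add_Ioi hf
    (hf.mono_set (Ioi_subset_Ioi hx)))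

theorem continuousOn_survival (hf : IntegrableOn f (Ioi a)) : ContinuousOn (survival f) (Ici a) :=
  hf.continuousOn_Ici_primitive_Ioi

theorem hasDerivAt_survival (hf : IntegrableOn f (Ioi a)) (hfc : ContinuousOn f (Ioi a))
    (hx : a < x) : HasDerivAt (survival f) (-f x) x := by
  have hprimitive : HasDerivAt (fun u ↦ ∫ t in a..u, f t) (f x) x :=
    intervalIntegral.integral_hasDerivAt_right
      ((intervalIntegrable_iff_integrableOn_Ioc_of_le hx.le).2 (hf.mono_set Ioc_subset_Ioi_self))
      (hfc.stronglyMeasurableAtFilter isOpen_Ioi x hx) (hfc.continuousAt (Ioi_mem_nhds hx))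
  refine (hprimitive.const_sub (survival f a)).congr_of_eventuallyEq ?_
  filter_upwards [Ioi_mem_nhds hx] with u hu
  exact survival_eq_sub_intervalIntegral hf (le_of_lt hu)

theorem antitoneOn_survival (hf : IntegrableOn f (Ioi a)) (hf₀ : ∀ t ∈ Ioi a, 0 ≤ f t) :
    AntitoneOn (survival f) (Ici a) := fun _ hx _ _ hxy ↦
  setIntegral_mono_set (hf.mono_set (Ioi_subset_Ioi hx))
    (ae_restrict_of_forall_mem measurableSet_Ioi fun t ht ↦ hf₀ t (Ioi_subset_Ioi hx ht))
    (Ioi_subset_Ioi hxy).eventuallyLE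

theorem survival_pos (hf : IntegrableOn f (Ioi a)) (hf₀ : ∀ t ∈ Ioi a, 0 < f t) (hx : a ≤ x) :
    0 < survival f x := by
  have hpos : ∀ t ∈ Ioi x, 0 < f t := fun t ht ↦ hf₀ t (Ioi_subset_Ioi hx ht)
  have hsupport : Function.support f ∩ Ioi x = Ioi x :=
    inter_eq_right.2 fun t ht ↦ (hpos t ht).ne'
  refine (setIntegral_pos_iff_support_of_nonneg_ae
    (ae_restrict_of_forall_mem measurableSet_Ioi fun t ht ↦ (hpos t ht).le)
    (hf.mono_set (Ioi_subset_Ioi hx))).2 ?_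
  simp [hsupport]

theorem norm_survival_le (hf : IntegrableOn f (Ioi a)) (hf₀ : ∀ t ∈ Ioi a, 0 ≤ f t) (hx : a ≤ x) :
    ‖survival f x‖ ≤ survival f a := by
  have hnonneg : 0 ≤ survival f x :=
    setIntegral_nonneg measurableSet_Ioi fun t ht ↦ hf₀ t (Ioi_subset_Ioi hx ht)
  rw [norm_of_nonneg hnonneg]
  exact antitoneOn_survival hf hf₀ self_mem_Ici hx hx

theorem integrableOn_survival_mul (hf : IntegrableOn f (Ioi a)) (hf₀ : ∀ t ∈ Ioi a, 0 ≤ f t)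
    {g : ℝ → ℝ} (hg : IntegrableOn g (Ioi a)) :
    IntegrableOn (fun t ↦ survival f t * g t) (Ioi a) :=
  hg.bdd_mul
    (((continuousOn_survival hf).mono Ioi_subset_Ici_self).aestronglyMeasurable measurableSet_Ioi)
    (ae_restrict_of_forall_mem measurableSet_Ioi fun _ ht ↦ norm_survival_le hf hf₀ (le_of_lt ht))

theorem survival_survival_mul (hf : IntegrableOn f (Ioi a)) (hfc : ContinuousOn f (Ioi a))
    (hf₀ : ∀ t ∈ Ioi a, 0 ≤ f t) (hx : a ≤ x) :
    survival (fun t ↦ survival f t * f t) x = survival f x ^ 2 / 2 := by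
  have hderiv : ∀ t ∈ Ioi x,
      HasDerivAt (fun u ↦ -(survival f u ^ 2 / 2)) (survival f t * f t) t := fun t ht ↦
    (((hasDerivAt_survival hf hfc (lt_of_le_of_lt hx ht)).pow 2).div_const 2).neg.congr_deriv
      (by push_cast; ring)
  have hcont : ContinuousOn (fun u ↦ -(survival f u ^ 2 / 2)) (Ici a) :=
    (((continuousOn_survival hf).pow 2).div_const 2).neg
  have hlim : Filter.Tendsto (fun u ↦ -(survival f u ^ 2 / 2)) Filter.atTop (nhds 0) := by
    have hS : Filter.Tendsto (survival f) Filter.atTop (nhds 0) :=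
      tendsto_integral_Ioi_zero Filter.tendsto_id
    simpa using ((hS.pow 2).div_const 2).neg
  have hint : IntegrableOn (fun t ↦ survival f t * f t) (Ioi x) :=
    (integrableOn_survival_mul hf hf₀ hf).mono_set (Ioi_subset_Ioi hx)
  rw [survival, integral_Ioi_of_hasDerivAt_of_tendsto
    ((hcont x hx).mono (Ici_subset_Ici.2 hx)) hderiv hint hlim]
  ring

end Survival

section TailFormula

variable {f : ℝ → ℝ} {a : ℝ}

theorem setIntegral_Ioi_indicator_Iio_const {t : ℝ} (c : ℝ) (ht : a ≤ t) :
    ∫ x in Ioi a, (Iio t).indicator (fun _ ↦ c) x = (t - a) * c := by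
  rw [setIntegral_indicator measurableSet_Iio, Ioi_inter_Iio, setIntegral_const,
    Real.volume_real_Ioo_of_le ht, smul_eq_mul]

theorem integrable_prod_indicator_Ioi (hf : AEStronglyMeasurable f (volume.restrict (Ioi a)))
    (hmoment : IntegrableOn (fun t ↦ (t - a) * f t) (Ioi a)) :
    Integrable (fun p : ℝ × ℝ ↦ (Iio p.2).indicator (fun _ ↦ f p.2) p.1)
      ((volume.restrict (Ioi a)).prod (volume.restrict (Ioi a))) := by
  have hmeas : AEStronglyMeasurable (fun p : ℝ × ℝ ↦ (Iio p.2).indicator (fun _ ↦ f p.2) p.1)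
      ((volume.restrict (Ioi a)).prod (volume.restrict (Ioi a))) :=
    hf.comp_snd.indicator (measurableSet_lt measurable_fst measurable_snd)
  refine (integrable_prod_iff' hmeas).2 ⟨?_, ?_⟩
  · refine ae_of_all _ fun t ↦ ?_
    change Integrable ((Iio t).indicator fun _ ↦ f t) (volume.restrict (Ioi a))
    rw [integrable_indicator_iff measurableSet_Iio, IntegrableOn,
      Measure.restrict_restrict measurableSet_Iio, Iio_inter_Ioi]
    exact integrableOn_const measure_Ioo_lt_top.ne
  · refine hmoment.norm.congr (ae_restrict_of_forall_mem measurableSet_Ioi fun t ht ↦ ?_)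
    have ht : a ≤ t := le_of_lt ht
    simp only [norm_indicator_eq_indicator_norm, setIntegral_Ioi_indicator_Iio_const _ ht, norm_mul,
      norm_of_nonneg (sub_nonneg.2 ht)]

theorem setIntegral_indicator_Iio_eq_survival {x : ℝ} (hx : a ≤ x) :
    ∫ t in Ioi a, (Iio t).indicator (fun _ ↦ f t) x = survival f x := by
  change ∫ t in Ioi a, (Ioi x).indicator f t = survival f x
  rw [setIntegral_indicator measurableSet_Ioi, Ioi_inter_Ioi, sup_eq_right.2 hx, survival]

theorem integrableOn_survival (hf : AEStronglyMeasurable f (volume.restrict (Ioi a)))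
    (hmoment : IntegrableOn (fun t ↦ (t - a) * f t) (Ioi a)) :
    IntegrableOn (survival f) (Ioi a) :=
  (integrable_prod_indicator_Ioi hf hmoment).integral_prod_left.congr
    (ae_restrict_of_forall_mem measurableSet_Ioi fun _ hx ↦
      setIntegral_indicator_Iio_eq_survival (le_of_lt hx))

theorem integral_survival (hf : AEStronglyMeasurable f (volume.restrict (Ioi a)))
    (hmoment : IntegrableOn (fun t ↦ (t - a) * f t) (Ioi a)) :
    ∫ x in Ioi a, survival f x = ∫ t in Ioi a, (t - a) * f t :=
  calc ∫ x in Ioi a, survival f x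
    _ = ∫ x in Ioi a, ∫ t in Ioi a, (Iio t).indicator (fun _ ↦ f t) x :=
      setIntegral_congr_fun measurableSet_Ioi fun _ hx ↦
        (setIntegral_indicator_Iio_eq_survival (le_of_lt hx)).symm
    _ = ∫ t in Ioi a, ∫ x in Ioi a, (Iio t).indicator (fun _ ↦ f t) x :=
      integral_integral_swap (integrable_prod_indicator_Ioi hf hmoment)
    _ = ∫ t in Ioi a, (t - a) * f t :=
      setIntegral_congr_fun measurableSet_Ioi fun t ht ↦
        setIntegral_Ioi_indicator_Iio_const (f t) (le_of_lt ht)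

end TailFormula

section MonotoneHazardRate

variable {f : ℝ → ℝ} {a x y : ℝ}

theorem hasDerivAt_log_survival (hf : IntegrableOn f (Ioi a)) (hfc : ContinuousOn f (Ioi a))
    (hx : a < x) (hS : survival f x ≠ 0) :
    HasDerivAt (fun t ↦ log (survival f t)) (-hazardRate f x) x :=
  ((hasDerivAt_survival hf hfc hx).log hS).congr_deriv (neg_div _ _)

theorem concaveOn_log_survival (hf : IntegrableOn f (Ioi a)) (hfc : ContinuousOn f (Ioi a))
    (hS : ∀ t ∈ Ici a, survival f t ≠ 0) (hmono : MonotoneOn (hazardRate f) (Ioi a)) :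
    ConcaveOn ℝ (Ici a) (fun t ↦ log (survival f t)) := by
  have hderiv : ∀ t ∈ Ioi a, HasDerivAt (fun t ↦ log (survival f t)) (-hazardRate f t) t :=
    fun t ht ↦ hasDerivAt_log_survival hf hfc ht (hS t (Ioi_subset_Ici_self ht))
  refine AntitoneOn.concaveOn_of_deriv (convex_Ici a) ((continuousOn_survival hf).log hS) ?_ ?_ <;>
    rw [interior_Ici]
  · exact fun t ht ↦ (hderiv t ht).differentiableAt.differentiableWithinAt
  · exact hmono.neg.congr fun t ht ↦ (hderiv t ht).deriv.symm

theorem exp_neg_mul_hazardRate_mul_survival_le (hf : IntegrableOn f (Ioi a))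
    (hfc : ContinuousOn f (Ioi a)) (hS : ∀ t ∈ Ici a, 0 < survival f t)
    (hmono : MonotoneOn (hazardRate f) (Ioi a)) (hx : a ≤ x) (hxy : x < y) :
    exp (-((y - x) * hazardRate f y)) * survival f x ≤ survival f y := by
  have hy : a < y := hx.trans_lt hxy
  have hslope : -hazardRate f y ≤ slope (fun t ↦ log (survival f t)) x y :=
    (concaveOn_log_survival hf hfc (fun t ht ↦ (hS t ht).ne') hmono).le_slope_of_hasDerivAt
      hx hy.le hxy (hasDerivAt_log_survival hf hfc hy (hS y hy.le).ne')
  rw [slope_def_field, le_div_iff₀ (sub_pos.2 hxy)] at hslope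
  rw [← log_le_log_iff (mul_pos (exp_pos _) (hS x hx)) (hS y hy.le),
    log_mul (exp_pos _).ne' (hS x hx).ne', log_exp]
  linarith

theorem survival_mul_survival_le_sq_midpoint (hf : IntegrableOn f (Ioi a))
    (hfc : ContinuousOn f (Ioi a)) (hS : ∀ t ∈ Ici a, 0 < survival f t)
    (hmono : MonotoneOn (hazardRate f) (Ioi a)) (hx : a ≤ x) (hy : a ≤ y) :
    survival f x * survival f y ≤ survival f ((x + y) / 2) ^ 2 := by
  have hmid : a ≤ (x + y) / 2 := by linarith
  have hconcave := (concaveOn_log_survival hf hfc (fun t ht ↦ (hS t ht).ne') hmono).2 hx hy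
    (by norm_num : (0 : ℝ) ≤ 1 / 2) (by norm_num : (0 : ℝ) ≤ 1 / 2) (by norm_num)
  have hcomb : (1 / 2 : ℝ) • x + (1 / 2 : ℝ) • y = (x + y) / 2 := by
    simp only [smul_eq_mul]; ring
  rw [hcomb, smul_eq_mul, smul_eq_mul] at hconcave
  rw [← log_le_log_iff (mul_pos (hS x hx) (hS y hy)) (pow_pos (hS _ hmid) 2),
    log_mul (hS x hx).ne' (hS y hy).ne', log_pow, Nat.cast_ofNat]
  linarith

theorem survival_zero_mul_survival_two_mul_le_sq (hf : IntegrableOn f (Ioi 0))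
    (hfc : ContinuousOn f (Ioi 0)) (hS : ∀ t ∈ Ici 0, 0 < survival f t)
    (hmono : MonotoneOn (hazardRate f) (Ioi 0)) (hx : 0 ≤ x) :
    survival f 0 * survival f (2 * x) ≤ survival f x ^ 2 := by
  simpa only [zero_add, mul_div_cancel_left₀ x two_ne_zero] using
    survival_mul_survival_le_sq_midpoint hf hfc hS hmono le_rfl (mul_nonneg zero_le_two hx)

theorem survival_zero_div_four_mul_mean_le (hf : IntegrableOn f (Ioi 0))
    (hfc : ContinuousOn f (Ioi 0)) (hf₀ : ∀ t ∈ Ioi 0, 0 < f t)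
    (hmono : MonotoneOn (hazardRate f) (Ioi 0)) (hmean : IntegrableOn (fun t ↦ t * f t) (Ioi 0)) :
    survival f 0 / 4 * ∫ t in Ioi 0, t * f t ≤ ∫ t in Ioi 0, t * (survival f t * f t) := by
  have hf₀' : ∀ t ∈ Ioi 0, 0 ≤ f t := fun t ht ↦ (hf₀ t ht).le
  have hSf : IntegrableOn (fun t ↦ survival f t * f t) (Ioi 0) :=
    integrableOn_survival_mul hf hf₀' hf
  have hmean' : IntegrableOn (fun t ↦ (t - 0) * f t) (Ioi 0) := by simpa only [sub_zero]
  have hmeanSf : IntegrableOn (fun t ↦ (t - 0) * (survival f t * f t)) (Ioi 0) := by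
    simpa only [sub_zero, mul_left_comm] using integrableOn_survival_mul hf hf₀' hmean
  have hsq : EqOn (survival fun t ↦ survival f t * f t) (fun x ↦ survival f x ^ 2 / 2) (Ioi 0) :=
    fun x hx ↦ survival_survival_mul hf hfc hf₀' (le_of_lt hx)
  have hdouble : ∀ x ∈ Ioi (0 : ℝ),
      survival f 0 / 2 * survival f (2 * x) ≤ survival f x ^ 2 / 2 := fun x hx ↦ by
    linarith [survival_zero_mul_survival_two_mul_le_sq hf hfc (fun t ht ↦ survival_pos hf hf₀ ht)
      hmono (le_of_lt hx)]
  calc survival f 0 / 4 * ∫ t in Ioi 0, t * f t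
    _ = survival f 0 / 4 * ∫ x in Ioi 0, survival f x := by
      rw [integral_survival hf.aestronglyMeasurable hmean']; simp only [sub_zero]
    _ = ∫ x in Ioi 0, survival f 0 / 2 * survival f (2 * x) := by
      rw [integral_const_mul, integral_comp_mul_left_Ioi _ _ two_pos, mul_zero, smul_eq_mul]; ring
    _ ≤ ∫ x in Ioi 0, survival f x ^ 2 / 2 := by
      refine setIntegral_mono_on (Integrable.const_mul ?_ _) ?_ measurableSet_Ioi hdouble
      · rw [← IntegrableOn, integrableOn_Ioi_comp_mul_left_iff _ _ two_pos, mul_zero]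
        exact integrableOn_survival hf.aestronglyMeasurable hmean'
      · exact (integrableOn_survival hSf.aestronglyMeasurable hmeanSf).congr_fun hsq
          measurableSet_Ioi
    _ = ∫ t in Ioi 0, t * (survival f t * f t) := by
      rw [← setIntegral_congr_fun measurableSet_Ioi hsq,
        integral_survival hSf.aestronglyMeasurable hmeanSf]
      simp only [sub_zero]

end MonotoneHazardRate

section VirtualValue

/-- Myerson's virtual valuation `x - (1 - F x) / f x`, written through the hazard rate. -/
noncomputable def virtualValue (f : ℝ → ℝ) (x : ℝ) : ℝ := x - (hazardRate f x)⁻¹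

variable {f ψ : ℝ → ℝ} {a y : ℝ}

theorem hazardRate_pos (hf : IntegrableOn f (Ioi a)) (hf₀ : ∀ t ∈ Ici a, 0 < f t) :
    ∀ t ∈ Ici a, 0 < hazardRate f t := fun t ht ↦
  div_pos (hf₀ t ht) (survival_pos hf (fun u hu ↦ hf₀ u (Ioi_subset_Ici_self hu)) ht)

theorem monotoneOn_virtualValue {s : Set ℝ} (hpos : ∀ t ∈ s, 0 < hazardRate f t)
    (hmono : MonotoneOn (hazardRate f) s) : MonotoneOn (virtualValue f) s :=
  fun x hx _ hy hxy ↦ sub_le_sub hxy (inv_anti₀ (hpos x hx) (hmono hx hy hxy))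

theorem monotoneOn_of_rightInvOn_virtualValue (hf : IntegrableOn f (Ioi a))
    (hf₀ : ∀ t ∈ Ici a, 0 < f t) (hmono : MonotoneOn (hazardRate f) (Ici a))
    (hmaps : MapsTo ψ (Ioi a) (Ici a)) (hψ : RightInvOn ψ (virtualValue f) (Ioi a)) :
    MonotoneOn ψ (Ioi a) :=
  Function.monotoneOn_of_rightInvOn_of_mapsTo
    (monotoneOn_virtualValue (hazardRate_pos hf hf₀) hmono) hψ hmaps

theorem exp_neg_one_mul_survival_virtualValue_le (hf : IntegrableOn f (Ioi a))
    (hfc : ContinuousOn f (Ioi a)) (hf₀ : ∀ t ∈ Ici a, 0 < f t)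
    (hmono : MonotoneOn (hazardRate f) (Ioi a)) (hy : a ≤ y) (hφy : a ≤ virtualValue f y) :
    exp (-1) * survival f (virtualValue f y) ≤ survival f y := by
  have hh : 0 < hazardRate f y := hazardRate_pos hf hf₀ y hy
  have hgap : (y - virtualValue f y) * hazardRate f y = 1 := by
    rw [virtualValue, sub_sub_cancel, inv_mul_cancel₀ hh.ne']
  have hlt : virtualValue f y < y := sub_lt_self y (inv_pos.2 hh)
  have hS : ∀ t ∈ Ici a, 0 < survival f t := fun t ht ↦
    survival_pos hf (fun u hu ↦ hf₀ u (Ioi_subset_Ici_self hu)) ht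
  simpa only [hgap] using exp_neg_mul_hazardRate_mul_survival_le hf hfc hS hmono hφy hlt

theorem integrableOn_survival_comp_mul (hf : IntegrableOn f (Ioi a))
    (hf₀ : ∀ t ∈ Ioi a, 0 ≤ f t) (hmaps : MapsTo ψ (Ioi a) (Ici a)) (hψ : MonotoneOn ψ (Ioi a))
    {g : ℝ → ℝ} (hg : IntegrableOn g (Ioi a)) :
    IntegrableOn (fun z ↦ survival f (ψ z) * g z) (Ioi a) := by
  have hanti : AntitoneOn (fun z ↦ survival f (ψ z)) (Ioi a) :=
    fun x hx y hy hxy ↦ antitoneOn_survival hf hf₀ (hmaps hx) (hmaps hy) (hψ hx hy hxy)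
  exact hg.bdd_mul
    (aemeasurable_restrict_of_antitoneOn measurableSet_Ioi hanti).aestronglyMeasurable
    (ae_restrict_of_forall_mem measurableSet_Ioi fun z hz ↦ norm_survival_le hf hf₀ (hmaps hz))

theorem integrableOn_rightInv_sub_mul (hf : IntegrableOn f (Ioi a)) (hf₀ : ∀ t ∈ Ici a, 0 < f t)
    (hmono : MonotoneOn (hazardRate f) (Ici a)) (hmaps : MapsTo ψ (Ioi a) (Ici a))
    (hψ : RightInvOn ψ (virtualValue f) (Ioi a)) :
    IntegrableOn (fun z ↦ (ψ z - z) * f z) (Ioi a) := by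
  have hψm : AEMeasurable ψ (volume.restrict (Ioi a)) :=
    aemeasurable_restrict_of_monotoneOn measurableSet_Ioi
      (monotoneOn_of_rightInvOn_virtualValue hf hf₀ hmono hmaps hψ)
  refine hf.bdd_mul (c := (hazardRate f a)⁻¹) (hψm.sub aemeasurable_id).aestronglyMeasurable
    (ae_restrict_of_forall_mem measurableSet_Ioi fun z hz ↦ ?_)
  have hh := hazardRate_pos hf hf₀
  have hgap : ψ z - z = (hazardRate f (ψ z))⁻¹ := by
    nth_rw 2 [← hψ hz]
    exact sub_sub_cancel _ _
  rw [hgap, norm_of_nonneg (inv_nonneg.2 (hh _ (hmaps hz)).le)]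
  exact inv_anti₀ (hh a self_mem_Ici) (hmono self_mem_Ici (hmaps hz) (hmaps hz))

theorem integral_mul_survival_comp_eq_add (hf : IntegrableOn f (Ioi a))
    (hf₀ : ∀ t ∈ Ici a, 0 < f t) (hmono : MonotoneOn (hazardRate f) (Ici a))
    (hmean : IntegrableOn (fun t ↦ t * f t) (Ioi a)) (hmaps : MapsTo ψ (Ioi a) (Ici a))
    (hψ : RightInvOn ψ (virtualValue f) (Ioi a)) :
    ∫ z in Ioi a, ψ z * survival f (ψ z) * f z =
      (∫ z in Ioi a, (ψ z - z) * survival f (ψ z) * f z) +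
        ∫ z in Ioi a, survival f (ψ z) * (z * f z) := by
  have hψmono := monotoneOn_of_rightInvOn_virtualValue hf hf₀ hmono hmaps hψ
  have hSg {g : ℝ → ℝ} (hg : IntegrableOn g (Ioi a)) :
      IntegrableOn (fun z ↦ survival f (ψ z) * g z) (Ioi a) :=
    integrableOn_survival_comp_mul hf (fun t ht ↦ (hf₀ t (Ioi_subset_Ici_self ht)).le) hmaps hψmono
      hg
  have hgap : IntegrableOn (fun z ↦ (ψ z - z) * survival f (ψ z) * f z) (Ioi a) := by
    simpa only [mul_left_comm, mul_assoc] using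
      hSg (integrableOn_rightInv_sub_mul hf hf₀ hmono hmaps hψ)
  rw [← integral_add hgap (hSg hmean)]
  exact integral_congr_ae (ae_of_all _ fun z ↦ by ring)

theorem survival_zero_div_four_exp_one_mul_mean_le (hf : IntegrableOn f (Ioi 0))
    (hfc : ContinuousOn f (Ioi 0)) (hf₀ : ∀ t ∈ Ici 0, 0 < f t)
    (hmono : MonotoneOn (hazardRate f) (Ici 0))
    (hmean : IntegrableOn (fun t ↦ t * f t) (Ioi 0)) (hmaps : MapsTo ψ (Ioi 0) (Ici 0))
    (hψ : RightInvOn ψ (virtualValue f) (Ioi 0)) :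
    survival f 0 / (4 * exp 1) * ∫ t in Ioi 0, t * f t ≤
      ∫ z in Ioi 0, survival f (ψ z) * (z * f z) := by
  have hf_pos : ∀ t ∈ Ioi 0, 0 < f t := fun t ht ↦ hf₀ t (Ioi_subset_Ici_self ht)
  have hf_nonneg : ∀ t ∈ Ioi 0, 0 ≤ f t := fun t ht ↦ (hf_pos t ht).le
  have hmono' := hmono.mono Ioi_subset_Ici_self
  have hψmono := monotoneOn_of_rightInvOn_virtualValue hf hf₀ hmono hmaps hψ
  calc survival f 0 / (4 * exp 1) * ∫ t in Ioi 0, t * f t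
    _ = exp (-1) * (survival f 0 / 4 * ∫ t in Ioi 0, t * f t) := by
      rw [exp_neg]; field_simp
    _ ≤ exp (-1) * ∫ z in Ioi 0, z * (survival f z * f z) := by
      gcongr
      exact survival_zero_div_four_mul_mean_le hf hfc hf_pos hmono' hmean
    _ = ∫ z in Ioi 0, exp (-1) * (survival f z * (z * f z)) := by
      simp only [integral_const_mul, mul_left_comm (survival f _)]
    _ ≤ ∫ z in Ioi 0, survival f (ψ z) * (z * f z) := by
      refine setIntegral_mono_on ((integrableOn_survival_mul hf hf_nonneg hmean).const_mul _)
        (integrableOn_survival_comp_mul hf hf_nonneg hmaps hψmono hmean) measurableSet_Ioi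
        fun z hz ↦ ?_
      have hdrop : exp (-1) * survival f z ≤ survival f (ψ z) := by
        simpa only [hψ hz] using exp_neg_one_mul_survival_virtualValue_le hf hfc hf₀ hmono'
          (hmaps hz) ((hψ hz).symm ▸ le_of_lt hz)
      rw [← mul_assoc]
      exact mul_le_mul_of_nonneg_right hdrop (mul_nonneg (le_of_lt hz) (hf_nonneg z hz))

end VirtualValue

theorem stmt_5
(f F : ℝ → ℝ)
    (hf_cont : ContinuousOn f (Ici 0))
    (hf_pos : ∀ z ∈ Ici (0:ℝ), 0 < f z)
    (hF : ∀ z ∈ Ici (0:ℝ), F z = ∫ t in (0:ℝ)..z, f t)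
    (hF_lt : ∀ z ∈ Ici (0:ℝ), F z < 1)
    (hprob : ∫ z in Ioi (0:ℝ), f z = 1)
(hMHR : ∀ y z : ℝ, 0 ≤ y → y ≤ z → f y / (1 - F y) ≤ f z / (1 - F z))
(φ ψ : ℝ → ℝ)
    (hφ : ∀ z ∈ Ici (0:ℝ), φ z = z - (1 - F z) / f z)
    (hφ_mono : StrictMonoOn φ (Ici 0))
    (hφ_top : Filter.Tendsto φ Filter.atTop Filter.atTop)
    (hψ : ∀ y ∈ Ici (0:ℝ), ψ y ∈ Ici (0:ℝ) ∧ φ (ψ y) = y)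
(hmean : IntegrableOn (fun z => z * f z) (Ioi 0)) :
    ∫ z in Ioi (0:ℝ), ψ z * (1 - F (ψ z)) * f z
      ≥ (∫ z in Ioi (0:ℝ), (ψ z - z) * (1 - F (ψ z)) * f z)
        + (1 / (4 * Real.exp 1)) * ∫ z in Ioi (0:ℝ), z * f z := by
  have hf_int : IntegrableOn f (Ioi 0) :=
    not_imp_comm.1 integral_undef (hprob.trans_ne one_ne_zero)
  have hS₀ : survival f 0 = 1 := hprob
  have hS : ∀ z ∈ Ici (0 : ℝ), 1 - F z = survival f z := fun z hz ↦ by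
    rw [hF z hz, survival_eq_sub_intervalIntegral hf_int hz, hS₀]
  have hmono : MonotoneOn (hazardRate f) (Ici 0) := fun y hy z hz hyz ↦ by
    simpa only [hazardRate, hS y hy, hS z hz] using hMHR y z hy hyz
  have hmaps : MapsTo ψ (Ioi 0) (Ici 0) := fun z hz ↦ (hψ z (Ioi_subset_Ici_self hz)).1
  have hinv : RightInvOn ψ (virtualValue f) (Ioi 0) := fun z hz ↦ by
    rw [virtualValue, hazardRate, inv_div, ← hS _ (hmaps hz), ← hφ _ (hmaps hz)]
    exact (hψ z (Ioi_subset_Ici_self hz)).2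
  have hcongr (u : ℝ → ℝ) : ∫ z in Ioi (0 : ℝ), u z * (1 - F (ψ z)) * f z =
      ∫ z in Ioi 0, u z * survival f (ψ z) * f z :=
    setIntegral_congr_fun measurableSet_Ioi fun z hz ↦ by simp only [hS _ (hmaps hz)]
  have hbound := survival_zero_div_four_exp_one_mul_mean_le hf_int
    (hf_cont.mono Ioi_subset_Ici_self) hf_pos hmono hmean hmaps hinv
  rw [hcongr ψ, hcongr fun z ↦ ψ z - z,
    integral_mul_survival_comp_eq_add hf_int hf_pos hmono hmean hmaps hinv]
  rw [hS₀] at hbound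
  exact add_le_add_right hbound _
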